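/- Let ψ : ℝ³ → ℝ be continuous with ψ ≥ 0, and let u, g ∈ C²(ℝ³) satisfy Δ(u + g) = ψ u³ on all of ℝ³. Suppose there exists a constant C > 0 such that |u(x)| ≤ C/|x| and |g(x)| ≤ C/|x| for all |x| ≥ 1. Then sup_{x ∈ ℝ³} |u(x)| ≤ 2 · sup_{x ∈ ℝ³} |g(x)|. -/

import Mathlib

/-- Partial derivative in the `i`-th coordinate direction. -/
noncomputable def pderiv' {d : ℕ} (i : Fin d) (f : EuclideanSpace ℝ (Fin d) → ℝ) :
    EuclideanSpace ℝ (Fin d) → ℝ :=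
  fun x => fderiv ℝ f x (EuclideanSpace.single i 1)

/-- The Laplacian `Δf = Σ_i ∂_i ∂_i f`. -/
noncomputable def lap {d : ℕ} (f : EuclideanSpace ℝ (Fin d) → ℝ) :
    EuclideanSpace ℝ (Fin d) → ℝ :=
  fun x => ∑ i : Fin d, pderiv' i (pderiv' i f) x

/-!
Put `w = u + g` and `M = sup |g|`. Wherever `|w| > M ≥ |g|`, the functions `u` and `w` have the same
sign, so `u Δw = ψ u⁴ ≥ 0` makes `w` subharmonic where `w > M` and superharmonic where `w < -M`.
Since `limsup |w| ≤ M` at infinity, the maximum principle for `w` and `-w` gives `|w| ≤ M`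
everywhere, whence `|u| ≤ |w| + |g| ≤ 2M`. The maximum principle itself compares `Δ ≤ 0` at a
maximum of `w + ε‖x‖²` over the compact set `{w ≥ m}`, `m > M`, with
`Δ(w + ε‖x‖²) ≥ 2ε dim E > 0`.
-/

open Filter Topology Set InnerProductSpace Laplacian Module

section SecondDerivativeTest

theorem deriv_deriv_nonpos_of_isLocalMax {f : ℝ → ℝ} {a : ℝ} (hf : ContinuousAt f a)
    (hmax : IsLocalMax f a) : deriv (deriv f) a ≤ 0 := by
  by_contra! hpos
  have hmin : IsLocalMin f a := isLocalMin_of_deriv_deriv_pos hpos hmax.deriv_eq_zero hf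
  have hconst : f =ᶠ[𝓝 a] fun _ ↦ f a := by
    filter_upwards [hmax, hmin] with t hle hge using le_antisymm hle hge
  have hzero : deriv (deriv f) a = 0 := by simpa using hconst.deriv.deriv_eq
  exact hpos.ne' hzero

variable {E : Type*} [NormedAddCommGroup E] [NormedSpace ℝ E] {f : E → ℝ} {x : E}

theorem deriv_deriv_comp_add_smul (hf : ContDiffAt ℝ 2 f x) (v : E) :
    deriv (deriv fun t : ℝ ↦ f (x + t • v)) 0 = iteratedFDeriv ℝ 2 f x ![v, v] := by
  have hline (t : ℝ) : HasDerivAt (fun t : ℝ ↦ x + t • v) v t := by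
    simpa using ((hasDerivAt_id t).smul_const v).const_add x
  have hline_tendsto : Tendsto (fun t : ℝ ↦ x + t • v) (𝓝 0) (𝓝 x) := by
    simpa using (hline 0).continuousAt.tendsto
  have hdiff : ∀ᶠ y in 𝓝 x, DifferentiableAt ℝ f y :=
    (hf.eventually (by simp)).mono fun y hy ↦ hy.differentiableAt two_ne_zero
  have hfirst : deriv (fun t : ℝ ↦ f (x + t • v)) =ᶠ[𝓝 0] fun t ↦ fderiv ℝ f (x + t • v) v := by
    filter_upwards [hline_tendsto.eventually hdiff] with t ht
    exact (ht.hasFDerivAt.comp_hasDerivAt t (hline t)).deriv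
  have hfderiv : HasFDerivAt (fderiv ℝ f) (fderiv ℝ (fderiv ℝ f) x) (x + (0 : ℝ) • v) := by
    simpa using
      ((hf.fderiv_right (m := 1) (by norm_num)).differentiableAt one_ne_zero).hasFDerivAt
  have hsecond : HasDerivAt (fun t : ℝ ↦ fderiv ℝ f (x + t • v) v)
      (fderiv ℝ (fderiv ℝ f) x v v) 0 := by
    have hcomp : HasDerivAt (fun t : ℝ ↦ fderiv ℝ f (x + t • v)) (fderiv ℝ (fderiv ℝ f) x v) 0 :=
      hfderiv.comp_hasDerivAt 0 (hline 0)
    simpa using hcomp.clm_apply (hasDerivAt_const 0 v)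
  rw [hfirst.deriv_eq, hsecond.deriv, iteratedFDeriv_two_apply]
  simp only [Matrix.cons_val_zero, Matrix.cons_val_one]

theorem iteratedFDeriv_two_nonpos_of_isLocalMax (hf : ContDiffAt ℝ 2 f x) (hmax : IsLocalMax f x)
    (v : E) : iteratedFDeriv ℝ 2 f x ![v, v] ≤ 0 := by
  have hline : ContinuousAt (fun t : ℝ ↦ x + t • v) 0 := by fun_prop
  have hx : x + (0 : ℝ) • v = x := by simp
  have hf_line : ContinuousAt (fun t : ℝ ↦ f (x + t • v)) 0 :=
    ContinuousAt.comp' (hx.symm ▸ hf.continuousAt) hline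
  have hmax_line : IsLocalMax (fun t : ℝ ↦ f (x + t • v)) 0 :=
    IsLocalMax.comp_continuous (g := fun t : ℝ ↦ x + t • v) (hx.symm ▸ hmax) hline
  exact deriv_deriv_comp_add_smul hf v ▸ deriv_deriv_nonpos_of_isLocalMax hf_line hmax_line

end SecondDerivativeTest

section LaplaceOperator

variable {E : Type*} [NormedAddCommGroup E] [InnerProductSpace ℝ E] [FiniteDimensional ℝ E]

theorem laplacian_nonpos_of_isLocalMax {f : E → ℝ} {x : E} (hf : ContDiffAt ℝ 2 f x)
    (hmax : IsLocalMax f x) : Δ f x ≤ 0 := by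
  rw [laplacian_eq_iteratedFDeriv_stdOrthonormalBasis]
  exact Finset.sum_nonpos fun i _ ↦ iteratedFDeriv_two_nonpos_of_isLocalMax hf hmax _

theorem laplacian_norm_sq (x : E) : Δ (fun y : E ↦ ‖y‖ ^ 2) x = 2 * finrank ℝ E := by
  have hfderiv : fderiv ℝ (fun y : E ↦ ‖y‖ ^ 2) = (2 • innerSL ℝ : E →L[ℝ] E →L[ℝ] ℝ) :=
    funext fderiv_norm_sq_apply
  rw [laplacian_eq_iteratedFDeriv_stdOrthonormalBasis]
  simp only [iteratedFDeriv_two_apply, hfderiv, ContinuousLinearMap.fderiv]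
  simp [innerSL_apply_apply ℝ, mul_comm]

theorem lap_eq_laplacian {d : ℕ} {f : EuclideanSpace ℝ (Fin d) → ℝ} {x : EuclideanSpace ℝ (Fin d)}
    (hf : ContDiffAt ℝ 2 f x) : lap f x = Δ f x := by
  have hdiff : DifferentiableAt ℝ (fderiv ℝ f) x :=
    (hf.fderiv_right (m := 1) (by norm_num)).differentiableAt one_ne_zero
  have hpderiv (i : Fin d) : pderiv' i (pderiv' i f) x =
      fderiv ℝ (fderiv ℝ f) x (EuclideanSpace.single i 1) (EuclideanSpace.single i 1) := by
    unfold pderiv'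
    rw [fderiv_clm_apply hdiff (differentiableAt_const _)]
    simp
  simp [lap, hpderiv, iteratedFDeriv_two_apply,
    laplacian_eq_iteratedFDeriv_orthonormalBasis f (EuclideanSpace.basisFun (Fin d) ℝ)]

end LaplaceOperator

section MaximumPrinciple

theorem exists_isLocalMax_add_mul_norm_sq {E : Type*} [SeminormedAddCommGroup E] {w : E → ℝ}
    (hw : Continuous w) {m : ℝ} (hK : IsCompact {x | m ≤ w x}) {a : E} (ha : m < w a) :
    ∃ ε > 0, ∃ x, m < w x ∧ IsLocalMax (fun y ↦ w y + ε * ‖y‖ ^ 2) x := by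
  obtain ⟨R, hR⟩ := hK.exists_bound_of_continuousOn (f := fun x ↦ ‖x‖ ^ 2) (by fun_prop)
  obtain ⟨ε, hε, hεR⟩ : ∃ ε > 0, R * ε < w a - m := exists_pos_mul_lt (sub_pos.2 ha) R
  obtain ⟨x, hxK, hx⟩ := hK.exists_isMaxOn ⟨a, ha.le⟩ (f := fun y ↦ w y + ε * ‖y‖ ^ 2)
    (by fun_prop)
  have hmx : m < w x := by
    have hle : w a + ε * ‖a‖ ^ 2 ≤ w x + ε * ‖x‖ ^ 2 := hx ha.le
    have hxR : ε * ‖x‖ ^ 2 ≤ R * ε := by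
      rw [mul_comm]
      gcongr
      exact (Real.le_norm_self _).trans (hR x hxK)
    have : 0 ≤ ε * ‖a‖ ^ 2 := by positivity
    linarith
  refine ⟨ε, hε, x, hmx, ?_⟩
  filter_upwards [hw.continuousAt.eventually (lt_mem_nhds hmx)] with y hy using hx hy.le

variable {E : Type*} [NormedAddCommGroup E] [InnerProductSpace ℝ E] [FiniteDimensional ℝ E]
  [Nontrivial E] {w : E → ℝ} {M : ℝ}

theorem le_of_laplacian_nonneg (hw : ContDiff ℝ 2 w) (hlap : ∀ x, M < w x → 0 ≤ Δ w x)
    (hlim : ∀ m > M, ∀ᶠ x in cocompact E, w x < m) (a : E) : w a ≤ M := by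
  by_contra! ha
  obtain ⟨m, hMm, hma⟩ := exists_between ha
  have hK : IsCompact {x | m ≤ w x} := by
    obtain ⟨K, hK, hKm⟩ := mem_cocompact'.1 (hlim m hMm)
    exact hK.of_isClosed_subset (isClosed_le continuous_const hw.continuous)
      fun x (hx : m ≤ w x) ↦ hKm hx.not_gt
  obtain ⟨ε, hε, x, hmx, hmax⟩ := exists_isLocalMax_add_mul_norm_sq hw.continuous hK hma
  have hsq : ContDiffAt ℝ 2 (fun y : E ↦ ‖y‖ ^ 2) x := (contDiff_norm_sq ℝ).contDiffAt
  have hsmul : ContDiffAt ℝ 2 (ε • fun y : E ↦ ‖y‖ ^ 2) x := hsq.const_smul ε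
  have hle : Δ (w + ε • fun y : E ↦ ‖y‖ ^ 2) x ≤ 0 :=
    laplacian_nonpos_of_isLocalMax (hw.contDiffAt.add hsmul) hmax
  rw [hw.contDiffAt.laplacian_add hsmul, laplacian_smul ε hsq, laplacian_norm_sq,
    smul_eq_mul] at hle
  have hdim : (0 : ℝ) < finrank ℝ E := mod_cast finrank_pos
  have hperturb : 0 < ε * (2 * finrank ℝ E) := by positivity
  linarith [hlap x (hMm.trans hmx)]

theorem abs_le_of_mul_laplacian_nonneg (hw : ContDiff ℝ 2 w) (hM : 0 ≤ M)
    (hlap : ∀ x, M < |w x| → 0 ≤ w x * Δ w x)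
    (hlim : ∀ m > M, ∀ᶠ x in cocompact E, |w x| < m) (a : E) : |w a| ≤ M := by
  refine abs_le'.2 ⟨le_of_laplacian_nonneg hw (fun x hx ↦ ?_) (fun m hm ↦ ?_) a,
    le_of_laplacian_nonneg (w := -w) hw.neg (fun x hx ↦ ?_) (fun m hm ↦ ?_) a⟩
  · exact nonneg_of_mul_nonneg_right (hlap x (hx.trans_le (le_abs_self _))) (hM.trans_lt hx)
  · exact (hlim m hm).mono fun x hx ↦ (abs_lt.1 hx).2
  · have hmul : 0 ≤ (-w) x * Δ (-w) x := by
      simpa [laplacian_neg] using hlap x (hx.trans_le (neg_le_abs _))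
    exact nonneg_of_mul_nonneg_right hmul (hM.trans_lt hx)
  · exact (hlim m hm).mono fun x hx ↦ neg_lt.1 (abs_lt.1 hx).1

theorem abs_add_le_of_mul_laplacian_nonneg {u g : E → ℝ} (hug : ContDiff ℝ 2 (u + g))
    (hlap : ∀ x, 0 ≤ u x * Δ (u + g) x) (hu : Tendsto u (cocompact E) (𝓝 0))
    (hg : ∀ x, |g x| ≤ M) (a : E) : |u a + g a| ≤ M := by
  refine abs_le_of_mul_laplacian_nonneg hug ((abs_nonneg _).trans (hg a)) (fun x hx ↦ ?_)
    (fun m hm ↦ ?_) a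
  · obtain ⟨hgl, hgr⟩ := abs_le.1 (hg x)
    rw [Pi.add_apply] at hx ⊢
    rcases lt_abs.1 hx with hpos | hneg
    · have hux : 0 < u x := by linarith
      exact mul_nonneg (by linarith) (nonneg_of_mul_nonneg_right (hlap x) hux)
    · have hux : u x < 0 := by linarith
      exact mul_nonneg_of_nonpos_of_nonpos (by linarith)
        (nonpos_of_mul_nonneg_right (hlap x) hux)
  · have husmall : ∀ᶠ x in cocompact E, |u x| < m - M :=
      (tendsto_zero_iff_abs_tendsto_zero u).1 hu |>.eventually_lt_const (sub_pos.2 hm)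
    filter_upwards [husmall] with x hx
    calc |u x + g x| ≤ |u x| + |g x| := abs_add_le _ _
      _ < m := by linarith [hg x]

end MaximumPrinciple

section Decay

theorem tendsto_zero_of_abs_le_div_norm {E : Type*} [SeminormedAddCommGroup E] [ProperSpace E]
    {f : E → ℝ} {C : ℝ} (hf : ∀ x, 1 ≤ ‖x‖ → |f x| ≤ C / ‖x‖) : Tendsto f (cocompact E) (𝓝 0) :=
  squeeze_zero_norm' ((tendsto_norm_cocompact_atTop.eventually_ge_atTop 1).mono hf)
    (tendsto_norm_cocompact_atTop.const_div_atTop C)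

theorem bddAbove_range_abs_of_tendsto_zero {X : Type*} [TopologicalSpace X] {f : X → ℝ}
    (hf : Continuous f) (hlim : Tendsto f (cocompact X) (𝓝 0)) :
    BddAbove (range fun x ↦ |f x|) := by
  obtain ⟨B, hB⟩ := (hf.isBounded_range_iff_isBigO.2 (hlim.isBigO_one ℝ)).exists_norm_le
  exact ⟨B, forall_mem_range.2 fun x ↦ hB _ (mem_range_self x)⟩

end Decay

theorem stmt14_general {E : Type*} [NormedAddCommGroup E] [InnerProductSpace ℝ E]
    [FiniteDimensional ℝ E] [Nontrivial E] {u g : E → ℝ} (hug : ContDiff ℝ 2 (u + g))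
    (hlap : ∀ x, 0 ≤ u x * Δ (u + g) x) (hu : Tendsto u (cocompact E) (𝓝 0))
    (hg : BddAbove (range fun x ↦ |g x|)) : (⨆ x, |u x|) ≤ 2 * ⨆ x, |g x| := by
  have hgM (x : E) : |g x| ≤ ⨆ y, |g y| := le_ciSup hg x
  refine ciSup_le fun x ↦ ?_
  calc |u x| = |(u x + g x) - g x| := by rw [add_sub_cancel_right]
    _ ≤ |u x + g x| + |g x| := abs_sub _ _
    _ ≤ (⨆ y, |g y|) + ⨆ y, |g y| :=
      add_le_add (abs_add_le_of_mul_laplacian_nonneg hug hlap hu hgM x) (hgM x)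
    _ = 2 * ⨆ y, |g y| := (two_mul _).symm

/-- If `Δ(u + g) = ψ u³` on `ℝ³` with `ψ ≥ 0` and `u`, `g` decay like `C/|x|` at infinity,
then `sup |u| ≤ 2 sup |g|`. -/
theorem stmt14 (ψ : EuclideanSpace ℝ (Fin 3) → ℝ)
    (hψc : Continuous ψ) (hψ0 : ∀ x, 0 ≤ ψ x)
    (u g : EuclideanSpace ℝ (Fin 3) → ℝ)
    (hu : ContDiff ℝ 2 u) (hg : ContDiff ℝ 2 g)
    (heq : ∀ x, lap (fun y => u y + g y) x = ψ x * (u x) ^ 3)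
    (C : ℝ) (hC : 0 < C)
    (hudecay : ∀ x : EuclideanSpace ℝ (Fin 3), 1 ≤ ‖x‖ → |u x| ≤ C / ‖x‖)
    (hgdecay : ∀ x : EuclideanSpace ℝ (Fin 3), 1 ≤ ‖x‖ → |g x| ≤ C / ‖x‖) :
    (⨆ x : EuclideanSpace ℝ (Fin 3), |u x|) ≤ 2 * ⨆ x : EuclideanSpace ℝ (Fin 3), |g x| := by
  refine stmt14_general (hu.add hg) (fun x ↦ ?_) (tendsto_zero_of_abs_le_div_norm hudecay)
    (bddAbove_range_abs_of_tendsto_zero hg.continuous (tendsto_zero_of_abs_le_div_norm hgdecay))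
  calc 0 ≤ ψ x * u x ^ 4 := mul_nonneg (hψ0 x) (by positivity)
    _ = u x * (ψ x * u x ^ 3) := by ring
    _ = u x * Δ (u + g) x := by rw [← heq, lap_eq_laplacian (hu.add hg).contDiffAt]; rfl
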